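/- The tile F ⊂ K has nonempty interior and, moreover, F is the closure of its interior. -/

import Mathlib

/-- The diagonal embedding `φ : ℚ → K = ℝ × ℚ₂`, `φ(z) = (z, z)`. -/
noncomputable def phi (z : ℚ) : ℝ × ℚ_[2] := ((z : ℝ), (z : ℚ_[2]))

/-- The tile `F ⊂ K = ℝ × ℚ₂`: all points of the form
`(1/2)·∑_{i=1}^{∞} d_{-i}·φ(1)·(-3/2)^{-i}` with digits `d_{-i} ∈ {0,1,2}`, the series
converging in `K` since multiplication by `(-3/2)⁻¹` contracts both coordinates. -/
noncomputable def Ftile : Set (ℝ × ℚ_[2]) :=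
  {x : ℝ × ℚ_[2] | ∃ d : ℕ → ℕ, (∀ i, d i ≤ 2) ∧
    HasSum (fun i : ℕ => phi ((1 / 2 : ℚ) * (d i : ℚ) * (-3 / 2 : ℚ) ^ (-(i : ℤ) - 1))) x}


open Filter Topology

lemma phi_add' (a b : ℚ) : phi (a + b) = phi a + phi b := by
  ext <;> simp [phi]

lemma phi_mul' (a b : ℚ) : phi (a * b) = phi a * phi b := by
  ext <;> simp [phi]

lemma phi_pow' (a : ℚ) (n : ℕ) : phi (a ^ n) = phi a ^ n := by
  ext <;> simp [phi]

/-- The rational terms. -/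
def qterm (d : ℕ → ℕ) (i : ℕ) : ℚ := (1 / 2 : ℚ) * (d i : ℚ) * (-2 / 3 : ℚ) ^ (i + 1)

lemma qterm_eq (d : ℕ → ℕ) (i : ℕ) :
    (1 / 2 : ℚ) * (d i : ℚ) * (-3 / 2 : ℚ) ^ (-(i : ℤ) - 1) = qterm d i := by
  have h : (-(i : ℤ) - 1) = -((i + 1 : ℕ) : ℤ) := by push_cast; ring
  rw [qterm, h, zpow_neg, zpow_natCast, ← inv_pow]
  norm_num

lemma two_adic_norm : ‖(2 : ℚ_[2])‖ = 1 / 2 := by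
  have := Padic.norm_p (p := 2)
  simpa using this

lemma three_adic_norm : ‖(3 : ℚ_[2])‖ = 1 := by
  have h := (Padic.norm_natCast_eq_one_iff (p := 2) (n := 3)).2 (by norm_num)
  simpa using h

lemma nat_adic_norm (n : ℕ) : ‖(n : ℚ_[2])‖ ≤ 1 := by
  simpa using Padic.norm_int_le_one (p := 2) (n : ℤ)

lemma int_adic_norm (n : ℤ) : ‖(n : ℚ_[2])‖ ≤ 1 := Padic.norm_int_le_one (p := 2) n

lemma norm_term (d : ℕ → ℕ) (hd : ∀ i, d i ≤ 2) (i : ℕ) :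
    ‖phi (qterm d i)‖ ≤ (2 / 3 : ℝ) ^ i := by
  have h2 : (d i : ℝ) ≤ 2 := by exact_mod_cast hd i
  have h0 : (0 : ℝ) ≤ d i := Nat.cast_nonneg _
  rw [Prod.norm_def]
  refine max_le ?_ ?_
  · simp only [phi, qterm]
    push_cast
    rw [norm_mul, norm_mul, norm_pow]
    have e1 : ‖(-2 / 3 : ℝ)‖ = 2 / 3 := by norm_num
    have e2 : ‖(1 / 2 : ℝ)‖ = 1 / 2 := by norm_num
    have e3 : ‖(d i : ℝ)‖ = d i := by simp
    rw [e1, e2, e3, pow_succ]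
    have hp : (0 : ℝ) ≤ (2 / 3) ^ i := by positivity
    nlinarith
  · simp only [phi, qterm]
    push_cast
    rw [norm_mul, norm_mul, norm_pow]
    have e1 : ‖(-2 / 3 : ℚ_[2])‖ = 1 / 2 := by
      rw [norm_div, norm_neg, two_adic_norm, three_adic_norm]; norm_num
    have e2 : ‖(1 / 2 : ℚ_[2])‖ = 2 := by
      rw [norm_div, two_adic_norm]; norm_num
    rw [e1, e2, pow_succ]
    have hp : (0 : ℝ) ≤ (1 / 2) ^ i := by positivity
    have hq : (1 / 2 : ℝ) ^ i ≤ (2 / 3) ^ i :=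
      pow_le_pow_left₀ (by norm_num) (by norm_num) i
    have := nat_adic_norm (d i)
    nlinarith [norm_nonneg (d i : ℚ_[2])]

lemma geo_summable : Summable (fun i : ℕ => (2 / 3 : ℝ) ^ i) :=
  summable_geometric_of_lt_one (by norm_num) (by norm_num)

lemma summable_term (d : ℕ → ℕ) (hd : ∀ i, d i ≤ 2) :
    Summable (fun i => phi (qterm d i)) :=
  Summable.of_norm_bounded geo_summable (norm_term d hd)

lemma mem_Ftile_iff (x : ℝ × ℚ_[2]) :
    x ∈ Ftile ↔ ∃ d : ℕ → ℕ, (∀ i, d i ≤ 2) ∧ HasSum (fun i => phi (qterm d i)) x := by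
  simp only [Ftile, Set.mem_ofPred_eq, qterm_eq]

lemma isCompact_Ftile : IsCompact Ftile := by
  have hle : ∀ (d : ℕ → Fin 3) i, (fun i => ((d i : Fin 3) : ℕ)) i ≤ 2 := fun d i => by
    have := (d i).2
    show (d i : ℕ) ≤ 2
    omega
  have hc : Continuous (fun d : ℕ → Fin 3 => ∑' i, phi (qterm (fun i => (d i : ℕ)) i)) := by
    refine continuous_tsum (u := fun i => (2 / 3 : ℝ) ^ i) ?_ geo_summable ?_
    · intro i
      have : (fun d : ℕ → Fin 3 => phi (qterm (fun i => (d i : ℕ)) i)) =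
          (fun a : Fin 3 => phi ((1 / 2 : ℚ) * ((a : ℕ) : ℚ) * (-2 / 3 : ℚ) ^ (i + 1))) ∘
            (fun d : ℕ → Fin 3 => d i) := rfl
      rw [this]
      exact continuous_of_discreteTopology.comp (continuous_apply i)
    · intro i d
      exact norm_term _ (hle d) i
  have : Ftile = Set.range (fun d : ℕ → Fin 3 => ∑' i, phi (qterm (fun i => (d i : ℕ)) i)) := by
    ext x
    rw [mem_Ftile_iff]
    constructor
    · rintro ⟨d, hd, hx⟩
      exact ⟨fun i => ⟨d i, by have := hd i; omega⟩, hx.tsum_eq⟩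
    · rintro ⟨d, rfl⟩
      exact ⟨_, hle d, (summable_term _ (hle d)).hasSum⟩
  rw [this]
  exact isCompact_range hc

lemma norm_le_of_mem (x : ℝ × ℚ_[2]) (hx : x ∈ Ftile) : ‖x‖ ≤ 3 := by
  obtain ⟨d, hd, h⟩ := (mem_Ftile_iff x).1 hx
  rw [← h.tsum_eq]
  refine tsum_of_norm_bounded ?_ (norm_term d hd)
  have := hasSum_geometric_of_lt_one (r := (2 / 3 : ℝ)) (by norm_num) (by norm_num)
  norm_num at this
  exact this

/-- Head part `d` of length `n` followed by a point of the tile. -/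
lemma concat_mem (d : ℕ → ℕ) (hd : ∀ i, d i ≤ 2) (n : ℕ) (y : ℝ × ℚ_[2]) (hy : y ∈ Ftile) :
    (∑ i ∈ Finset.range n, phi (qterm d i)) + phi (-2 / 3) ^ n * y ∈ Ftile := by
  obtain ⟨e, he, h⟩ := (mem_Ftile_iff y).1 hy
  rw [mem_Ftile_iff]
  refine ⟨fun i => if i < n then d i else e (i - n), fun i => ?_, ?_⟩
  · show (if i < n then d i else e (i - n)) ≤ 2
    split_ifs
    exacts [hd _, he _]
  · rw [← hasSum_nat_add_iff' n]
    have h1 : ∑ i ∈ Finset.range n,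
        phi (qterm (fun i => if i < n then d i else e (i - n)) i) =
        ∑ i ∈ Finset.range n, phi (qterm d i) := by
      refine Finset.sum_congr rfl fun i hi => ?_
      simp [qterm, Finset.mem_range.1 hi]
    rw [h1, add_sub_cancel_left]
    have h2 := h.mul_left (phi (-2 / 3) ^ n)
    have h3 : (fun i => phi (qterm (fun i => if i < n then d i else e (i - n)) (i + n))) =
        fun i => phi (-2 / 3) ^ n * phi (qterm e i) := by
      funext i
      rw [← phi_pow', ← phi_mul']
      congr 1
      simp [qterm]
      ring
    rw [h3]
    exact h2

lemma zero_mem_Ftile : (0 : ℝ × ℚ_[2]) ∈ Ftile := by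
  rw [mem_Ftile_iff]
  refine ⟨fun _ => 0, fun _ => by simp, ?_⟩
  have : (fun i => phi (qterm (fun _ => 0) i)) = fun _ => 0 := by
    ext i <;> simp [qterm, phi]
  rw [this]
  exact hasSum_zero

lemma phi_sum' (f : ℕ → ℚ) (n : ℕ) :
    phi (∑ i ∈ Finset.range n, f i) = ∑ i ∈ Finset.range n, phi (f i) := by
  induction n with
  | zero => ext <;> simp [phi]
  | succ n ih => rw [Finset.sum_range_succ, Finset.sum_range_succ, phi_add', ih]

lemma expand (n : ℕ) : ∀ a : ℤ, ∃ (s : ℤ) (d : ℕ → ℕ), (∀ i, d i ≤ 2) ∧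
    (a : ℚ) / 3 ^ n = s + ∑ i ∈ Finset.range n, qterm d i := by
  induction n with
  | zero => intro a; exact ⟨a, fun _ => 0, fun _ => by simp, by simp⟩
  | succ n ih =>
    intro a
    have key : ∃ k : ℕ, k ≤ 2 ∧ (3 : ℤ) ∣ a - k * ((-1) ^ (n + 1) * 2 ^ n) := by
      have hu : ((-1 : ℤ) ^ (n + 1) * 2 ^ n) % 3 = 2 := by
        clear ih
        induction n with
        | zero => norm_num
        | succ n ih =>
          have e : (-1 : ℤ) ^ (n + 1 + 1) * 2 ^ (n + 1) = -2 * ((-1 : ℤ) ^ (n + 1) * 2 ^ n) := by ring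
          rw [e]; omega
      have h3 : a % 3 = 0 ∨ a % 3 = 1 ∨ a % 3 = 2 := by omega
      rcases h3 with h | h | h
      · exact ⟨0, by norm_num, by push_cast; omega⟩
      · exact ⟨2, by norm_num, by push_cast; omega⟩
      · exact ⟨1, by norm_num, by push_cast; omega⟩
    obtain ⟨k, hk, b, hb⟩ := key
    obtain ⟨s, d, hd, h⟩ := ih b
    refine ⟨s, fun i => if i = n then k else d i, fun i => ?_, ?_⟩
    · show (if i = n then k else d i) ≤ 2
      split_ifs
      exacts [hk, hd _]
    · rw [Finset.sum_range_succ]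
      have h1 : ∑ i ∈ Finset.range n, qterm (fun i => if i = n then k else d i) i =
          ∑ i ∈ Finset.range n, qterm d i := by
        refine Finset.sum_congr rfl fun i hi => ?_
        have := (Finset.mem_range.1 hi).ne
        simp [qterm, this]
      rw [h1, ← add_assoc, ← h]
      have ha : (a : ℚ) = 3 * b + k * ((-1) ^ (n + 1) * 2 ^ n) := by
        have : a = 3 * b + k * ((-1) ^ (n + 1) * 2 ^ n) := by linarith
        exact_mod_cast this
      have e : (-2 / 3 : ℚ) ^ (n + 1) = (-1) ^ (n + 1) * 2 ^ (n + 1) / 3 ^ (n + 1) := by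
        rw [← mul_pow, ← div_pow]; norm_num
      simp only [qterm, if_true]
      rw [ha, e]
      field_simp
      ring

/-- Finite union of translates. -/
def Gset : Set (ℝ × ℚ_[2]) := ⋃ s ∈ Set.Icc (-4 : ℤ) 4, (fun y => y - phi s) ⁻¹' Ftile

lemma isClosed_Gset : IsClosed Gset := by
  refine Set.Finite.isClosed_biUnion (Set.finite_Icc _ _) fun s _ => ?_
  exact isCompact_Ftile.isClosed.preimage (by fun_prop)

lemma rat_mem_Gset (n : ℕ) (a : ℤ) (h : |(a : ℝ) / 3 ^ n| ≤ 1) :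
    phi ((a : ℚ) / 3 ^ n) ∈ Gset := by
  obtain ⟨s, d, hd, e⟩ := expand n a
  have hm := concat_mem d hd n 0 zero_mem_Ftile
  rw [mul_zero, add_zero, ← phi_sum'] at hm
  have hn := (norm_fst_le _).trans (norm_le_of_mem _ hm)
  have er : (a : ℝ) / 3 ^ n = s + ((∑ i ∈ Finset.range n, qterm d i : ℚ) : ℝ) := by
    exact_mod_cast congrArg (fun q : ℚ => (q : ℝ)) e
  have hs : |(s : ℝ)| ≤ 4 := by
    simp only [phi, Real.norm_eq_abs] at hn
    rw [abs_le] at *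
    constructor <;> linarith [hn.1, hn.2, h.1, h.2]
  have hs' : |s| ≤ 4 := by exact_mod_cast hs
  simp only [Gset, Set.mem_iUnion, Set.mem_preimage]
  refine ⟨s, abs_le.1 hs', ?_⟩
  rw [e, phi_add', add_sub_cancel_left]
  exact hm

lemma approx (x : ℝ) (y : ℚ_[2]) (hy : ‖y‖ ≤ 1) (k : ℕ) :
    ∃ a : ℤ, |(a : ℝ) / 3 ^ k - x| ≤ (2 / 3) ^ k ∧
      ‖(a : ℚ_[2]) / 3 ^ k - y‖ ≤ (1 / 2) ^ k := by
  obtain ⟨w, hw⟩ : ∃ w : ℤ_[2], (w : ℚ_[2]) = y := ⟨⟨y, hy⟩, rfl⟩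
  obtain ⟨z, hzw⟩ : ∃ z : ℤ_[2], z = 3 ^ k * w := ⟨_, rfl⟩
  have hz := PadicInt.appr_spec k z
  rw [← PadicInt.norm_le_pow_iff_mem_span_pow] at hz
  set b := z.appr k
  refine ⟨b + 2 ^ k * ⌊(x * 3 ^ k - b) / 2 ^ k⌋, ?_, ?_⟩
  · have h1 := Int.floor_le ((x * 3 ^ k - b) / 2 ^ k)
    have h2 := Int.lt_floor_add_one ((x * 3 ^ k - b) / 2 ^ k)
    set m := ⌊(x * 3 ^ k - b) / 2 ^ k⌋
    rw [le_div_iff₀ (by positivity)] at h1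
    rw [div_lt_iff₀ (by positivity)] at h2
    have : ((b + 2 ^ k * m : ℤ) : ℝ) / 3 ^ k - x = (b + 2 ^ k * m - x * 3 ^ k) / 3 ^ k := by
      push_cast; field_simp
    rw [this, abs_div, div_pow, abs_of_pos (show (0 : ℝ) < 3 ^ k by positivity)]
    gcongr
    rw [abs_le]
    constructor <;> nlinarith
  · set m := ⌊(x * 3 ^ k - b) / 2 ^ k⌋
    have h3 : (3 : ℚ_[2]) ^ k ≠ 0 := pow_ne_zero _ (by norm_num)
    have : ((b + 2 ^ k * m : ℤ) : ℚ_[2]) / 3 ^ k - y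
        = (-(3 ^ k * y - b) + 2 ^ k * m) / 3 ^ k := by
      push_cast; field_simp; ring
    rw [this, norm_div, norm_pow, three_adic_norm, one_pow, div_one]
    refine (Padic.nonarchimedean _ _).trans (max_le ?_ ?_)
    · rw [norm_neg]
      have : ‖(3 ^ k * y - b : ℚ_[2])‖ = ‖z - b‖ := by
        have e3 : ((3 : ℤ_[2]) : ℚ_[2]) = 3 := by exact_mod_cast PadicInt.coe_natCast (p := 2) 3
        have e4 : ((z - b : ℤ_[2]) : ℚ_[2]) = 3 ^ k * y - b := by
          rw [PadicInt.coe_sub, PadicInt.coe_natCast]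
          rw [hzw, PadicInt.coe_mul, PadicInt.coe_pow, e3, hw]
        rw [← e4]
        rfl
      rw [this]
      refine hz.trans (le_of_eq ?_)
      simp
    · rw [norm_mul, norm_pow, two_adic_norm]
      have := int_adic_norm m
      have hp : (0 : ℝ) ≤ (1 / 2) ^ k := by positivity
      nlinarith

lemma box_subset : Metric.ball (0 : ℝ × ℚ_[2]) 1 ⊆ Gset := by
  rintro ⟨x, y⟩ hxy
  rw [mem_ball_zero_iff, Prod.norm_def, max_lt_iff] at hxy
  obtain ⟨hx, hy⟩ := hxy
  simp only at hx hy
  choose a ha1 ha2 using approx x y hy.le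
  have t1 : Tendsto (fun k => (a k : ℝ) / 3 ^ k) atTop (𝓝 x) := by
    rw [tendsto_iff_norm_sub_tendsto_zero]
    exact squeeze_zero (fun _ => norm_nonneg _) ha1
      (tendsto_pow_atTop_nhds_zero_of_lt_one (by norm_num) (by norm_num))
  have t2 : Tendsto (fun k => (a k : ℚ_[2]) / 3 ^ k) atTop (𝓝 y) := by
    rw [tendsto_iff_norm_sub_tendsto_zero]
    exact squeeze_zero (fun _ => norm_nonneg _) ha2
      (tendsto_pow_atTop_nhds_zero_of_lt_one (by norm_num) (by norm_num))
  have t3 : Tendsto (fun k => phi ((a k : ℚ) / 3 ^ k)) atTop (𝓝 (x, y)) := by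
    have := t1.prodMk_nhds t2
    refine this.congr fun k => ?_
    simp [phi]
  refine isClosed_Gset.mem_of_tendsto t3 ?_
  have hev : ∀ᶠ k in atTop, |(a k : ℝ) / 3 ^ k| < 1 := t1.abs.eventually_lt_const hx
  filter_upwards [hev] with k hk
  exact rat_mem_Gset k (a k) hk.le

lemma interior_nonempty : (interior Ftile).Nonempty := by
  by_contra hne
  rw [Set.not_nonempty_iff_eq_empty] at hne
  have hcl : IsClosed Ftile := isCompact_Ftile.isClosed
  have hd : Dense (⋂ s : ℤ, ((fun y => y - phi s) ⁻¹' Ftile)ᶜ) := by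
    refine dense_iInter_of_isOpen (fun s => ?_) (fun s => ?_)
    · exact (hcl.preimage (by fun_prop)).isOpen_compl
    · rw [← interior_eq_empty_iff_dense_compl]
      have := (Homeomorph.subRight (phi s)).preimage_interior Ftile
      rw [hne] at this
      simpa using this.symm
  obtain ⟨p, hp, hpm⟩ := hd.inter_open_nonempty _ Metric.isOpen_ball
    (⟨0, Metric.mem_ball_self one_pos⟩ : (Metric.ball (0 : ℝ × ℚ_[2]) 1).Nonempty)
  have := box_subset hp
  simp only [Gset, Set.mem_iUnion] at this
  obtain ⟨s, _, hs⟩ := this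
  exact Set.mem_iInter.1 hpm s hs

lemma phi_inv_mul : phi (-3 / 2) * phi (-2 / 3) = 1 := by
  rw [← phi_mul']
  ext <;> norm_num [phi]

lemma pow_tendsto : Tendsto (fun n => phi (-2 / 3) ^ n) atTop (𝓝 0) := by
  have : Tendsto (fun n => ((-2 / 3 : ℝ) ^ n, (-2 / 3 : ℚ_[2]) ^ n)) atTop (𝓝 (0, 0)) := by
    refine Tendsto.prodMk_nhds ?_ ?_
    · exact tendsto_pow_atTop_nhds_zero_of_norm_lt_one (by norm_num)
    · refine tendsto_pow_atTop_nhds_zero_of_norm_lt_one ?_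
      rw [norm_div, norm_neg, two_adic_norm, three_adic_norm]; norm_num
  refine this.congr fun n => ?_
  ext <;> simp [phi]

/-- The tile `F ⊂ K` has nonempty interior and, moreover, `F` is the
closure of its interior. -/
theorem Ftile_closure_interior :
    (interior Ftile).Nonempty ∧ Ftile = closure (interior Ftile) := by
  refine ⟨interior_nonempty, Set.Subset.antisymm ?_ ?_⟩
  · intro x hx
    obtain ⟨p, hp⟩ := interior_nonempty
    obtain ⟨d, hd, h⟩ := (mem_Ftile_iff x).1 hx
    have t : Tendsto (fun n => (∑ i ∈ Finset.range n, phi (qterm d i)) + phi (-2 / 3) ^ n * p)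
        atTop (𝓝 x) := by
      simpa using h.tendsto_sum_nat.add (pow_tendsto.mul_const p)
    refine mem_closure_of_tendsto t (Eventually.of_forall fun n => ?_)
    have e : phi (-3 / 2) ^ n * phi (-2 / 3) ^ n = 1 := by
      rw [← mul_pow, phi_inv_mul, one_pow]
    rw [mem_interior]
    refine ⟨(fun y => phi (-3 / 2) ^ n * (y - ∑ i ∈ Finset.range n, phi (qterm d i))) ⁻¹'
      interior Ftile, ?_, isOpen_interior.preimage (by fun_prop), ?_⟩
    · intro y hy
      have hm := concat_mem d hd n _ (interior_subset hy)
      rw [← mul_assoc, mul_comm (phi (-2 / 3) ^ n), e, one_mul, add_sub_cancel] at hm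
      exact hm
    · rw [Set.mem_preimage, add_sub_cancel_left, ← mul_assoc, e, one_mul]
      exact hp
  · exact closure_minimal interior_subset isCompact_Ftile.isClosed
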